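/- For every fixed integer k ≥ 0, the sequence k! · C(n,k) / n^{n + 3k/2 − 2} converges, as n → ∞, to a positive finite limit (Wright's constant interpretation: k! times the k-th Wright constant). -/

import Mathlib

/-!
Let `W_k(x) = ∑ C(n,k) xⁿ / (n! eⁿ)` be the exponential generating function of the connected graphs
of excess `k`, with its singularity moved to `x = 1`, let `θ = x d/dx` and `U_k = θ W_k`.

Deleting an edge from a connected graph with `m + 1` edges and marking its two ends gives either a
connected graph with `m` edges and a marked ordered pair of distinct non-adjacent vertices, or an
ordered pair of rooted connected graphs with `m` edges in total. Counting both sides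
(`recurrence`) gives, on the level of coefficients,
`2 (n + k) w_{k+1} = (n (n - 1) - 2 (n + k - 1)) w_k + ∑_{i + j = k + 1} [xⁿ] U_i U_j`
and, for trees, `2 (n - 1) w_0 = [xⁿ] U_0²`. Abel's binomial identity shows that the series
`T = ∑_{n ≥ 1} n^(n-1) xⁿ / (n! eⁿ)` satisfies the latter recurrence too, so `U_0 = T`
(`U_zero`), and that `P = ∑ nⁿ xⁿ / (n! eⁿ)` equals `1 / (1 - T)` (`tree_mul_P`).
The terms `i = 0` and `j = 0` of the sum contain the unknown `U_{k+1}`; solving for it yields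
`2 U_{k+1} = P (X_k + Y_k) - 2 k P W_{k+1}` (`U_succ`), where `X_k` is essentially `θ² W_k` and
`Y_k = ∑_{i + j = k + 1, i, j ≥ 1} U_i U_j`.

The asymptotics are read off by comparing coefficients with those of `(1 - x)^(-h/2)`, written
`B ^ h`; these are positive and asymptotic to a constant times `n^(h/2 - 1)` (`tendsto_B_pow`).
Being asymptotic to a multiple of `B ^ h` (`Asy`) is compatible with sums, with products, where the
exponents add (`Asy.mul`), and with `θ`, which raises `h` by `2` (`Asy.theta`). By Stirling's
formula `P` has exponent `1`. By induction on `k` the series `θ U_k` has exponent `3 k + 1`, with a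
positive constant (`asy_U`): `X_k` and `Y_k` have exponent `3 k + 1`, so `P (X_k + Y_k)` has
exponent `3 k + 2`, the term `P W_{k+1}` is negligible, and hence `U_{k+1}` has exponent `3 k + 2`
and `θ U_{k+1}` has exponent `3 k + 4`. One more use of Stirling's formula turns
`n² C(n,k) / (n! eⁿ) ~ c n^((3 k - 1)/2)` into the claim.
-/

open Filter Nat

/-- `connGraphCount n k` is the number of connected simple graphs on the labeled vertex
set `{1,…,n}` (here `Fin n`) with exactly `n + k - 1` edges. -/
noncomputable def connGraphCount (n k : ℕ) : ℕ :=
  Nat.card {G : SimpleGraph (Fin n) // G.Connected ∧ G.edgeSet.ncard = n + k - 1}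

/-! ### Splitting a graph into two components -/

/-- `cg V q` is the number of connected graphs on the finite vertex type `V` with `q` edges. -/
noncomputable def cg (V : Type) (q : ℕ) : ℕ :=
  Nat.card {G : SimpleGraph V // G.Connected ∧ G.edgeSet.ncard = q}

/-- `Split H S` says that `H` has exactly the two connected components `S` and `Sᶜ`. -/
def Split {V : Type} (H : SimpleGraph V) (S : Set V) : Prop :=
  (H.induce S).Connected ∧ (H.induce Sᶜ).Connected ∧ ∀ a ∈ S, ∀ b ∉ S, ¬ H.Adj a b

lemma cg_congr {V W : Type} (e : V ≃ W) (q : ℕ) : cg V q = cg W q := by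
  refine Nat.card_congr (e.simpleGraph.subtypeEquiv fun G => ?_)
  have i : G ≃g e.simpleGraph G := ⟨e, by simp⟩
  rw [i.connected_iff, ← Nat.card_coe_set_eq, ← Nat.card_coe_set_eq, Nat.card_congr i.mapEdgeSet]

lemma cg_eq (V : Type) [Fintype V] (q : ℕ) : cg V q = cg (Fin (Fintype.card V)) q :=
  cg_congr (Fintype.equivFin V) q

/-- A set of vertices with no edge leaving it is closed under reachability. -/
lemma mem_of_reachable {V : Type} {H : SimpleGraph V} {S : Set V}
    (h : ∀ a ∈ S, ∀ b ∉ S, ¬ H.Adj a b) {a b : V} (hab : H.Reachable a b) (ha : a ∈ S) :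
    b ∈ S := by
  obtain ⟨p⟩ := hab
  induction p with
  | nil => exact ha
  | cons hadj p ih => exact ih (by by_contra hc; exact h _ ha _ hc hadj)

/-- For a disconnected graph `H` which becomes connected by adding the edge `uv`, the component of
`u` and its complement are the two components of `H`. -/
lemma split_iff {V : Type} {H : SimpleGraph V} {u v : V} {S : Set V} :
    (u ≠ v ∧ ¬ H.Adj u v ∧ (H ⊔ SimpleGraph.edge u v).Connected ∧ ¬ H.Connected ∧
      {w | H.Reachable u w} = S) ↔ (Split H S ∧ u ∈ S ∧ v ∉ S) := by
  constructor
  · rintro ⟨huv, hadj, hc, hn, rfl⟩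
    have key : ∀ w, H.Reachable u w ∨ H.Reachable v w := by
      intro w
      refine mem_of_reachable (S := {x | H.Reachable u x ∨ H.Reachable v x}) ?_ (hc u w)
        (Or.inl (SimpleGraph.Reachable.refl u))
      intro a ha b hb hab
      rw [SimpleGraph.sup_adj, SimpleGraph.edge_adj] at hab
      rcases hab with hab | ⟨⟨rfl, rfl⟩ | ⟨rfl, rfl⟩, -⟩
      · exact hb (ha.imp (fun h => h.trans hab.reachable) (fun h => h.trans hab.reachable))
      · exact hb (Or.inr (SimpleGraph.Reachable.refl _))
      · exact hb (Or.inl (SimpleGraph.Reachable.refl _))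
    have hr : ¬ H.Reachable u v := fun h => hn
      ((SimpleGraph.connected_iff_exists_forall_reachable _).2
        ⟨u, fun w => (key w).elim id (h.trans)⟩)
    have h1 : {w | H.Reachable u w} = (H.connectedComponentMk u).supp := by
      ext w; simp [SimpleGraph.reachable_comm]
    have h2 : {w | H.Reachable u w}ᶜ = (H.connectedComponentMk v).supp := by
      ext w
      simp only [Set.mem_compl_iff, Set.mem_ofPred_eq, SimpleGraph.ConnectedComponent.mem_supp_iff,
        SimpleGraph.ConnectedComponent.eq]
      exact ⟨fun h => ((key w).resolve_left h).symm, fun h h' => hr (h'.trans h)⟩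
    refine ⟨⟨?_, ?_, ?_⟩, SimpleGraph.Reachable.refl u, hr⟩
    · rw [h1]; exact (H.connectedComponentMk u).connected_toSimpleGraph
    · rw [h2]; exact (H.connectedComponentMk v).connected_toSimpleGraph
    · intro a ha b hb hab
      exact hb (SimpleGraph.Reachable.trans ha hab.reachable)
  · rintro ⟨⟨h1, h2, h3⟩, hu, hv⟩
    have r1 : ∀ w ∈ S, H.Reachable u w := fun w hw =>
      (h1 ⟨u, hu⟩ ⟨w, hw⟩).map (SimpleGraph.Embedding.induce S).toHom
    have r2 : ∀ w ∉ S, H.Reachable v w := fun w hw =>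
      (h2 ⟨v, hv⟩ ⟨w, hw⟩).map (SimpleGraph.Embedding.induce Sᶜ).toHom
    have huv : u ≠ v := fun h => hv (h ▸ hu)
    refine ⟨huv, h3 u hu v hv, ?_, fun h => hv (mem_of_reachable h3 (h u v) hu), ?_⟩
    · refine (SimpleGraph.connected_iff_exists_forall_reachable _).2 ⟨u, fun w => ?_⟩
      by_cases hw : w ∈ S
      · exact (r1 w hw).mono le_sup_left
      · refine SimpleGraph.Reachable.trans (SimpleGraph.Adj.reachable ?_)
          ((r2 w hw).mono le_sup_left)
        simp [SimpleGraph.edge_adj, huv]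
    · ext w
      exact ⟨fun h => mem_of_reachable h3 h hu, r1 w⟩

/-- A graph without edges between `S` and `Sᶜ` is a pair of graphs on `S` and on `Sᶜ`. -/
def splitEquiv {V : Type} (S : Set V) :
    {H : SimpleGraph V // ∀ a ∈ S, ∀ b ∉ S, ¬ H.Adj a b} ≃
      SimpleGraph S × SimpleGraph ↥Sᶜ where
  toFun H := (H.1.induce S, H.1.induce Sᶜ)
  invFun p := ⟨{
      Adj := fun a b => (∃ (ha : a ∈ S) (hb : b ∈ S), p.1.Adj ⟨a, ha⟩ ⟨b, hb⟩) ∨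
        ∃ (ha : a ∈ Sᶜ) (hb : b ∈ Sᶜ), p.2.Adj ⟨a, ha⟩ ⟨b, hb⟩
      symm := ⟨fun a b h => h.imp (fun ⟨x, y, z⟩ => ⟨y, x, z.symm⟩)
        (fun ⟨x, y, z⟩ => ⟨y, x, z.symm⟩)⟩
      loopless := ⟨fun a h => h.elim (fun ⟨x, y, z⟩ => z.ne rfl) (fun ⟨x, y, z⟩ => z.ne rfl)⟩ }, by
    rintro a ha b hb (⟨_, h, _⟩ | ⟨h, _⟩)
    exacts [hb h, h ha]⟩
  left_inv := by
    rintro ⟨H, hH⟩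
    ext a b
    have h1 := hH a
    have h2 := hH b
    by_cases ha : a ∈ S <;> by_cases hb : b ∈ S
    · simp [ha, hb]
    · simp [ha, hb, h1 ha b hb]
    · simpa [ha, hb, H.adj_comm a b] using h2 hb a ha
    · simp [ha, hb]
  right_inv := by
    rintro ⟨A, B⟩
    refine Prod.ext ?_ ?_
    · ext ⟨a, ha⟩ ⟨b, hb⟩
      simp [ha, hb]
    · ext ⟨a, ha⟩ ⟨b, hb⟩
      have ha' : a ∉ S := ha
      have hb' : b ∉ S := hb
      simp [ha', hb']

lemma ncard_split {V : Type} [Finite V] {S : Set V} {H : SimpleGraph V}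
    (hH : ∀ a ∈ S, ∀ b ∉ S, ¬ H.Adj a b) :
    H.edgeSet.ncard = (H.induce S).edgeSet.ncard + (H.induce Sᶜ).edgeSet.ncard := by
  have hE : H.edgeSet = (Sym2.map Subtype.val '' (H.induce S).edgeSet) ∪
      (Sym2.map Subtype.val '' (H.induce Sᶜ).edgeSet) := by
    ext e
    induction e with | h a b =>
    constructor
    · intro h
      rw [SimpleGraph.mem_edgeSet] at h
      by_cases ha : a ∈ S <;> by_cases hb : b ∈ S
      · exact Or.inl ⟨s(⟨a, ha⟩, ⟨b, hb⟩), h, rfl⟩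
      · exact absurd h (hH a ha b hb)
      · exact absurd h.symm (hH b hb a ha)
      · exact Or.inr ⟨s(⟨a, ha⟩, ⟨b, hb⟩), h, rfl⟩
    · rintro (⟨e, he, hx⟩ | ⟨e, he, hx⟩) <;> induction e with | h c d =>
      rw [← hx]
      exact he
  rw [hE, Set.ncard_union_eq, Set.ncard_image_of_injective, Set.ncard_image_of_injective]
  · exact Sym2.map.injective Subtype.val_injective
  · exact Sym2.map.injective Subtype.val_injective
  · rw [Set.disjoint_left]
    rintro _ ⟨e, -, rfl⟩ ⟨f, -, hf⟩
    induction e with | h a b =>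
    induction f with | h c d =>
    have := a.2
    have := b.2
    have := c.2
    simp at hf
    rcases hf with ⟨h, -⟩ | ⟨h, -⟩ <;> simp_all

/-! ### The edge-deletion recurrence -/

section Count
open scoped Classical
variable {V : Type} [Fintype V]

lemma cg_card (q : ℕ) :
    cg V q = (Finset.univ.filter fun G : SimpleGraph V =>
      G.Connected ∧ G.edgeSet.ncard = q).card := by
  rw [cg, Nat.card_eq_fintype_card, Fintype.card_subtype]

/-- The graphs with `m` edges whose components are `S` and `Sᶜ` are the pairs of connected graphs
on `S` and on `Sᶜ` with `m` edges in total. -/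
lemma card_split (S : Set V) (m : ℕ) :
    (Finset.univ.filter fun H : SimpleGraph V => Split H S ∧ H.edgeSet.ncard = m).card =
      ∑ p ∈ Finset.HasAntidiagonal.antidiagonal m, cg S p.1 * cg ↥Sᶜ p.2 := by
  rw [Finset.card_eq_sum_card_fiberwise (t := Finset.HasAntidiagonal.antidiagonal m)
    (f := fun H => ((H.induce S).edgeSet.ncard, (H.induce Sᶜ).edgeSet.ncard))]
  · refine Finset.sum_congr rfl fun p hp => ?_
    rw [Finset.HasAntidiagonal.mem_antidiagonal] at hp
    rw [cg, cg, ← Nat.card_prod, ← Fintype.card_coe, ← Nat.card_eq_fintype_card]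
    refine Nat.card_congr (Equiv.ofBijective (fun H => (⟨H.1.induce S, ?_⟩, ⟨H.1.induce Sᶜ, ?_⟩))
      ⟨?_, ?_⟩)
    · have := H.2
      simp only [Finset.mem_filter, Finset.mem_univ, true_and, Prod.ext_iff] at this
      exact ⟨this.1.1.1, this.2.1⟩
    · have := H.2
      simp only [Finset.mem_filter, Finset.mem_univ, true_and, Prod.ext_iff] at this
      exact ⟨this.1.1.2.1, this.2.2⟩
    · rintro ⟨H, hH⟩ ⟨H', hH'⟩ h
      simp only [Finset.mem_filter, Finset.mem_univ, true_and] at hH hH'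
      simp only [Prod.mk.injEq, Subtype.mk.injEq] at h
      have := (splitEquiv S).injective (a₁ := ⟨H, hH.1.1.2.2⟩) (a₂ := ⟨H', hH'.1.1.2.2⟩)
        (Prod.ext h.1 h.2)
      simpa using this
    · rintro ⟨⟨A, hA⟩, ⟨B, hB⟩⟩
      obtain ⟨⟨H, hH⟩, h⟩ := (splitEquiv S).surjective (A, B)
      have e1 : H.induce S = A := congrArg Prod.fst h
      have e2 : H.induce Sᶜ = B := congrArg Prod.snd h
      refine ⟨⟨H, ?_⟩, ?_⟩
      · simp only [Finset.mem_filter, Finset.mem_univ, true_and]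
        refine ⟨⟨⟨e1 ▸ hA.1, e2 ▸ hB.1, hH⟩, ?_⟩, ?_⟩
        · rw [ncard_split hH, e1, e2, hA.2, hB.2, hp]
        · rw [e1, e2, hA.2, hB.2]
      · simp only [e1, e2]
  · intro H hH
    simp only [Finset.coe_filter, Finset.mem_univ, true_and, Set.mem_ofPred_eq] at hH
    simp only [Finset.mem_coe, Finset.HasAntidiagonal.mem_antidiagonal]
    rw [← ncard_split hH.1.2.2, hH.2]

/-- The number of ordered pairs of adjacent vertices. -/
lemma card_adj (G : SimpleGraph V) :
    (Finset.univ.filter fun p : V × V => G.Adj p.1 p.2).card = 2 * G.edgeSet.ncard := by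
  rw [← Nat.card_coe_set_eq, Nat.card_eq_fintype_card, SimpleGraph.card_edgeSet,
    ← SimpleGraph.sum_degrees_eq_twice_card_edges, ← Finset.univ_product_univ,
    Finset.card_filter, Finset.sum_product]
  refine Finset.sum_congr rfl fun a _ => ?_
  rw [← SimpleGraph.card_neighborFinset_eq_degree, SimpleGraph.neighborFinset_eq_filter,
    Finset.card_filter]

/-- Counting triples `(G, u, v)` by first choosing `G`. -/
lemma card_pairs (P : SimpleGraph V → Prop) (Q : SimpleGraph V → V × V → Prop) (c : ℕ)
    (h : ∀ G, P G → (Finset.univ.filter fun p : V × V => Q G p).card = c) :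
    (Finset.univ.filter fun x : SimpleGraph V × (V × V) => P x.1 ∧ Q x.1 x.2).card =
      (Finset.univ.filter P).card * c := by
  rw [← Finset.univ_product_univ, Finset.card_filter, Finset.sum_product, Finset.card_filter,
    Finset.sum_mul]
  refine Finset.sum_congr rfl fun G _ => ?_
  by_cases hG : P G
  · simp only [hG, true_and, if_true, one_mul, ← Finset.card_filter, h G hG]
  · simp [hG]

lemma card_ne : (Finset.univ.filter fun p : V × V => p.1 ≠ p.2).card =
    Fintype.card V * (Fintype.card V - 1) := by
  have := card_adj (⊤ : SimpleGraph V)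
  simp only [SimpleGraph.top_adj] at this
  rw [this, ← Nat.card_coe_set_eq, Nat.card_eq_fintype_card, SimpleGraph.card_edgeSet,
    SimpleGraph.card_edgeFinset_top_eq_card_choose_two, Nat.choose_two_right,
    Nat.two_mul_div_two_of_even (Nat.even_mul_pred_self _)]

lemma edges_sup_edge {H : SimpleGraph V} {u v : V} (huv : u ≠ v) (h : ¬ H.Adj u v) :
    (H ⊔ SimpleGraph.edge u v).edgeSet.ncard = H.edgeSet.ncard + 1 := by
  have := H.card_edgeFinset_sup_edge h huv
  rwa [← SimpleGraph.card_edgeSet, ← SimpleGraph.card_edgeSet, ← Nat.card_eq_fintype_card,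
    ← Nat.card_eq_fintype_card, Nat.card_coe_set_eq, Nat.card_coe_set_eq] at this

/-- Removing the edge `uv` from a connected graph. -/
lemma card_delete (m : ℕ) :
    (Finset.univ.filter fun x : SimpleGraph V × (V × V) =>
      (x.1.Connected ∧ x.1.edgeSet.ncard = m + 1) ∧ x.1.Adj x.2.1 x.2.2).card =
    (Finset.univ.filter fun x : SimpleGraph V × (V × V) => x.1.edgeSet.ncard = m ∧
      x.2.1 ≠ x.2.2 ∧ ¬ x.1.Adj x.2.1 x.2.2 ∧
      (x.1 ⊔ SimpleGraph.edge x.2.1 x.2.2).Connected).card := by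
  have hback : ∀ (G : SimpleGraph V) (u v : V), G.Adj u v →
      G.deleteEdges {s(u, v)} ⊔ SimpleGraph.edge u v = G := by
    intro G u v h
    ext a b
    simp only [SimpleGraph.sup_adj, SimpleGraph.deleteEdges_adj, SimpleGraph.edge_adj,
      Set.mem_singleton_iff, Sym2.eq_iff]
    constructor
    · rintro (h' | ⟨⟨rfl, rfl⟩ | ⟨rfl, rfl⟩, -⟩)
      exacts [h'.1, h, h.symm]
    · intro h'
      have := h'.ne
      tauto
  have hno : ∀ (G : SimpleGraph V) (u v : V), ¬ (G.deleteEdges {s(u, v)}).Adj u v := by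
    simp
  refine Finset.card_bij' (fun x _ => (x.1.deleteEdges {s(x.2.1, x.2.2)}, x.2))
    (fun x _ => (x.1 ⊔ SimpleGraph.edge x.2.1 x.2.2, x.2)) ?_ ?_ ?_ ?_
  · rintro ⟨G, u, v⟩ h
    simp only [Finset.mem_filter, Finset.mem_univ, true_and] at h ⊢
    have h1 := edges_sup_edge h.2.ne (hno G u v)
    rw [hback G u v h.2] at h1 ⊢
    exact ⟨by omega, h.2.ne, hno G u v, h.1.1⟩
  · rintro ⟨G, u, v⟩ h
    simp only [Finset.mem_filter, Finset.mem_univ, true_and] at h ⊢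
    refine ⟨⟨h.2.2.2, by rw [edges_sup_edge h.2.1 h.2.2.1, h.1]⟩, ?_⟩
    simp [SimpleGraph.edge_adj, h.2.1]
  · rintro ⟨G, u, v⟩ h
    simp only [Finset.mem_filter, Finset.mem_univ, true_and] at h ⊢
    rw [hback G u v h.2]
  · rintro ⟨G, u, v⟩ h
    simp only [Finset.mem_filter, Finset.mem_univ, true_and] at h ⊢
    refine Prod.ext ?_ rfl
    ext a b
    simp only [SimpleGraph.sup_adj, SimpleGraph.deleteEdges_adj, SimpleGraph.edge_adj,
      Set.mem_singleton_iff, Sym2.eq_iff]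
    constructor
    · rintro ⟨h' | h', h''⟩
      · exact h'
      · exact absurd h'.1 (by tauto)
    · intro h'
      refine ⟨Or.inl h', ?_⟩
      rintro (⟨rfl, rfl⟩ | ⟨rfl, rfl⟩)
      exacts [h.2.2.1 h', h.2.2.1 h'.symm]

/-- A disconnected graph that becomes connected by adding the edge `uv` has exactly two
components, one containing `u` and the other `v`. -/
lemma card_disconnected (m : ℕ) :
    (Finset.univ.filter fun x : SimpleGraph V × (V × V) => (x.1.edgeSet.ncard = m ∧
    x.2.1 ≠ x.2.2 ∧ ¬ x.1.Adj x.2.1 x.2.2 ∧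
    (x.1 ⊔ SimpleGraph.edge x.2.1 x.2.2).Connected) ∧ ¬ x.1.Connected).card =
    ∑ S : Finset V, ∑ p ∈ Finset.HasAntidiagonal.antidiagonal m,
        S.card * (Fintype.card V - S.card) * (cg (Fin S.card) p.1 *
          cg (Fin (Fintype.card V - S.card)) p.2) := by
  rw [Finset.card_eq_sum_card_fiberwise (t := Finset.univ)
    (f := fun x => (Finset.univ.filter fun w => x.1.Reachable x.2.1 w)) (fun _ _ => by simp)]
  refine Finset.sum_congr rfl fun S _ => ?_
  have hS : (Finset.univ.filter fun x : SimpleGraph V × (V × V) =>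
      (Split x.1 (S : Set V) ∧ x.1.edgeSet.ncard = m) ∧ x.2.1 ∈ S ∧ x.2.2 ∉ S).card =
      (Finset.univ.filter fun H : SimpleGraph V =>
        Split H (S : Set V) ∧ H.edgeSet.ncard = m).card *
        (S.card * (Fintype.card V - S.card)) := by
    convert card_pairs (V := V) (fun H => Split H (S : Set V) ∧ H.edgeSet.ncard = m)
      (fun G p => p.1 ∈ S ∧ p.2 ∉ S) (S.card * (Fintype.card V - S.card)) (fun G _ => by
        rw [← Finset.card_compl, ← Finset.card_product]
        congr 1
        ext p
        simp)
  have c1 : Fintype.card (S : Set V) = S.card := by simp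
  have c2 : Fintype.card ↥(S : Set V)ᶜ = Fintype.card V - S.card := by
    rw [Fintype.card_compl_set, c1]
  rw [card_split] at hS
  simp only [cg_eq (↥(S : Set V)), cg_eq (↥(S : Set V)ᶜ), c1, c2] at hS
  rw [← Finset.mul_sum, mul_comm, ← hS]
  congr 1
  ext ⟨H, u, v⟩
  have := split_iff (H := H) (u := u) (v := v) (S := (S : Set V))
  have e : (Finset.univ.filter fun w => H.Reachable u w) = S ↔
      {w | H.Reachable u w} = (S : Set V) := by
    rw [← Finset.coe_inj]; simp
  simp only [Finset.mem_filter, Finset.mem_univ, true_and, e]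
  simp only [Finset.mem_coe] at this
  constructor
  · rintro ⟨⟨⟨a1, a2, a3, a4⟩, a5⟩, a6⟩
    obtain ⟨b1, b2⟩ := this.1 ⟨a2, a3, a4, a5, a6⟩
    exact ⟨⟨b1, a1⟩, b2⟩
  · rintro ⟨⟨b1, a1⟩, b2⟩
    obtain ⟨a2, a3, a4, a5, a6⟩ := this.2 ⟨b1, b2⟩
    exact ⟨⟨⟨a1, a2, a3, a4⟩, a5⟩, a6⟩

/-- Ordered pairs of distinct vertices of a connected graph are either non-adjacent or adjacent;
for the former, adding an edge keeps the graph connected. -/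
lemma card_connected (m : ℕ) :
    (Finset.univ.filter fun x : SimpleGraph V × (V × V) => (x.1.edgeSet.ncard = m ∧
    x.2.1 ≠ x.2.2 ∧ ¬ x.1.Adj x.2.1 x.2.2 ∧
    (x.1 ⊔ SimpleGraph.edge x.2.1 x.2.2).Connected) ∧ x.1.Connected).card +
    (Finset.univ.filter fun x : SimpleGraph V × (V × V) =>
      (x.1.Connected ∧ x.1.edgeSet.ncard = m) ∧ x.1.Adj x.2.1 x.2.2).card =
    (Finset.univ.filter fun x : SimpleGraph V × (V × V) =>
      (x.1.Connected ∧ x.1.edgeSet.ncard = m) ∧ x.2.1 ≠ x.2.2).card := by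
  rw [← Finset.card_union_of_disjoint]
  · congr 1
    ext ⟨H, u, v⟩
    simp only [Finset.mem_union, Finset.mem_filter, Finset.mem_univ, true_and]
    have h1 : H.Connected → (H ⊔ SimpleGraph.edge u v).Connected :=
      fun h => h.mono le_sup_left
    have h2 : H.Adj u v → u ≠ v := fun h => h.ne
    tauto
  · rw [Finset.disjoint_left]
    rintro ⟨H, u, v⟩ h h'
    simp only [Finset.mem_filter, Finset.mem_univ, true_and] at h h'
    tauto

/-- The edge-deletion recurrence: both sides count the connected graphs with `m + 1` edges and an
ordered pair of adjacent vertices, increased by the connected graphs with `m` edges and an ordered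
pair of adjacent vertices. The sum over `S` collects the cases in which the deleted edge is a
bridge, `S` being the component of its first end. -/
lemma recurrence (m : ℕ) :
    2 * (m + 1) * cg V (m + 1) + 2 * m * cg V m =
      Fintype.card V * (Fintype.card V - 1) * cg V m +
        ∑ S : Finset V, ∑ p ∈ Finset.HasAntidiagonal.antidiagonal m,
          S.card * (Fintype.card V - S.card) * (cg (Fin S.card) p.1 *
            cg (Fin (Fintype.card V - S.card)) p.2) := by
  have hA : (Finset.univ.filter fun x : SimpleGraph V × (V × V) =>
      (x.1.Connected ∧ x.1.edgeSet.ncard = m + 1) ∧ x.1.Adj x.2.1 x.2.2).card =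
      cg V (m + 1) * (2 * (m + 1)) := by
    rw [cg_card]
    convert card_pairs (V := V) (fun G => G.Connected ∧ G.edgeSet.ncard = m + 1)
      (fun G p => G.Adj p.1 p.2) (2 * (m + 1)) (fun G hG => by rw [card_adj, hG.2])
  have hB : (Finset.univ.filter fun x : SimpleGraph V × (V × V) =>
      (x.1.Connected ∧ x.1.edgeSet.ncard = m) ∧ x.1.Adj x.2.1 x.2.2).card =
      cg V m * (2 * m) := by
    rw [cg_card]
    convert card_pairs (V := V) (fun G => G.Connected ∧ G.edgeSet.ncard = m)
      (fun G p => G.Adj p.1 p.2) (2 * m) (fun G hG => by rw [card_adj, hG.2])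
  have hC : (Finset.univ.filter fun x : SimpleGraph V × (V × V) =>
      (x.1.Connected ∧ x.1.edgeSet.ncard = m) ∧ x.2.1 ≠ x.2.2).card =
      cg V m * (Fintype.card V * (Fintype.card V - 1)) := by
    rw [cg_card]
    convert card_pairs (V := V) (fun G => G.Connected ∧ G.edgeSet.ncard = m)
      (fun G p => p.1 ≠ p.2) (Fintype.card V * (Fintype.card V - 1))
      (fun G hG => by convert card_ne (V := V))
  rw [card_delete] at hA
  have hD := card_disconnected (V := V) m
  have hE := card_connected (V := V) m
  rw [← Finset.card_filter_add_card_filter_not (p := fun x => x.1.Connected),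
    Finset.filter_filter, Finset.filter_filter, hD] at hA
  have e1 : cg V m * (Fintype.card V * (Fintype.card V - 1)) =
    Fintype.card V * (Fintype.card V - 1) * cg V m := mul_comm _ _
  have e2 : cg V m * (2 * m) = 2 * m * cg V m := mul_comm _ _
  have e3 : cg V (m + 1) * (2 * (m + 1)) = 2 * (m + 1) * cg V (m + 1) := mul_comm _ _
  omega

end Count

/-! ### The recurrence for the generating functions -/

lemma cg_eq_zero {s a : ℕ} (h : a + 1 < s) : cg (Fin s) a = 0 := by
  rw [cg, Nat.card_eq_zero]
  left
  refine ⟨fun ⟨G, hG, hq⟩ => ?_⟩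
  have := hG.card_vert_le_card_edgeSet_add_one
  rw [Nat.card_coe_set_eq, hq, Nat.card_fin] at this
  omega

lemma connGraphCount_zero_left (k : ℕ) : connGraphCount 0 k = 0 := by
  rw [connGraphCount, Nat.card_eq_zero]
  left
  refine ⟨fun ⟨G, hG, hq⟩ => ?_⟩
  obtain ⟨x⟩ := hG.nonempty
  exact x.elim0

lemma connGraphCount_one_zero : connGraphCount 1 0 = 1 := by
  rw [connGraphCount, Nat.card_eq_one_iff_unique]
  refine ⟨⟨fun a b => Subtype.ext (Subsingleton.elim _ _)⟩, ⟨⟨⊥, ?_, ?_⟩⟩⟩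
  · exact (SimpleGraph.connected_iff_exists_forall_reachable _).2
      ⟨0, fun w => by rw [Subsingleton.elim w 0]⟩
  · simp

/-- The coefficient of `xⁿ` in the exponential generating function of the connected graphs of
excess `k`, after the substitution `x ↦ x / e` which moves the singularity to `x = 1`. -/
noncomputable def w (k n : ℕ) : ℝ := connGraphCount n k / n ! * Real.exp (-n)

/-- The generating function `θ W_k`, where `θ = x d/dx` and `W_k = ∑ w k n xⁿ`; it counts rooted
connected graphs. -/
noncomputable def U (k : ℕ) : PowerSeries ℝ := PowerSeries.mk fun n => n * w k n

lemma w_nonneg (k n : ℕ) : 0 ≤ w k n := by unfold w; positivity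

lemma w_zero (k : ℕ) : w k 0 = 0 := by simp [w, connGraphCount_zero_left]

/-- Re-indexing by excess: a connected graph with `s` vertices and `q` edges has excess
`q - s + 1`, so two of them with `n` vertices and `n + k - 2` edges in total have total
excess `k`. -/
lemma sum_excess {n s m k : ℕ} (hs : 0 < s) (hsn : s < n) (hm : m + 2 = n + k) :
    ∑ p ∈ Finset.HasAntidiagonal.antidiagonal m, cg (Fin s) p.1 * cg (Fin (n - s)) p.2 =
      ∑ p ∈ Finset.HasAntidiagonal.antidiagonal k,
        connGraphCount s p.1 * connGraphCount (n - s) p.2 := by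
  symm
  refine Finset.sum_of_injOn (fun p => (s + p.1 - 1, n - s + p.2 - 1)) ?_ ?_ ?_ ?_
  · rintro ⟨a, b⟩ _ ⟨c, d⟩ _ h
    simp only [Prod.mk.injEq] at h ⊢
    omega
  · rintro ⟨a, b⟩ h
    simp only [Finset.mem_coe, Finset.HasAntidiagonal.mem_antidiagonal] at h ⊢
    omega
  · rintro ⟨a, b⟩ h h'
    simp only [Finset.HasAntidiagonal.mem_antidiagonal] at h
    by_cases h1 : a + 1 < s
    · simp [cg_eq_zero h1]
    by_cases h2 : b + 1 < n - s
    · simp [cg_eq_zero h2]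
    refine absurd ⟨(a + 1 - s, b + 1 - (n - s)), ?_, ?_⟩ h'
    · simp only [Finset.mem_coe, Finset.HasAntidiagonal.mem_antidiagonal]
      omega
    · simp only [Prod.mk.injEq]
      omega
  · intros; rfl

/-- The edge-deletion recurrence in terms of the generating functions. The count with one edge
fewer stays in terms of `cg`, because for `k = 0` it would have excess `-1`. -/
lemma w_rec {n m k : ℕ} (hm : m + 2 = n + k) :
    2 * ((m : ℝ) + 1) * w k n =
      ((n : ℝ) * (n - 1) - 2 * m) * (cg (Fin n) m / n ! * Real.exp (-n)) +
      ∑ p ∈ Finset.HasAntidiagonal.antidiagonal k, PowerSeries.coeff n (U p.1 * U p.2) := by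
  have hr := recurrence (V := Fin n) m
  rw [Fintype.card_fin, ← Finset.powerset_univ,
    Finset.sum_powerset_apply_card (fun s => ∑ p ∈ Finset.HasAntidiagonal.antidiagonal m,
          s * (n - s) * (cg (Fin s) p.1 * cg (Fin (n - s)) p.2)), Finset.card_univ,
    Fintype.card_fin] at hr
  have hk : connGraphCount n k = cg (Fin n) (m + 1) := by
    have h : n + k - 1 = m + 1 := by omega
    rw [connGraphCount, cg, h]
  have hsum : ((∑ s ∈ Finset.range (n + 1), n.choose s •
      ∑ p ∈ Finset.HasAntidiagonal.antidiagonal m,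
          s * (n - s) * (cg (Fin s) p.1 * cg (Fin (n - s)) p.2) : ℕ) : ℝ) / n ! * Real.exp (-n) =
      ∑ p ∈ Finset.HasAntidiagonal.antidiagonal k, PowerSeries.coeff n (U p.1 * U p.2) := by
    simp only [PowerSeries.coeff_mul]
    rw [Finset.sum_comm, Finset.Nat.sum_antidiagonal_eq_sum_range_succ_mk, Nat.cast_sum,
      Finset.sum_div, Finset.sum_mul]
    refine Finset.sum_congr rfl fun s hs => ?_
    have hsn : s ≤ n := Nat.lt_succ_iff.1 (Finset.mem_range.1 hs)
    simp only [U, PowerSeries.coeff_mk]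
    rcases Nat.eq_zero_or_pos s with rfl | hs0
    · simp
    rcases hsn.eq_or_lt with rfl | hlt
    · simp
    rw [← Finset.mul_sum, sum_excess hs0 hlt hm, smul_eq_mul, Nat.cast_mul, Nat.cast_mul,
      Nat.cast_sum, Nat.cast_choose ℝ hsn, Finset.mul_sum, Finset.mul_sum, Finset.sum_div,
      Finset.sum_mul]
    refine Finset.sum_congr rfl fun p _ => ?_
    have he : Real.exp (-(n : ℝ)) = Real.exp (-(s : ℝ)) * Real.exp (-((n - s : ℕ) : ℝ)) := by
      rw [← Real.exp_add, Nat.cast_sub hsn]; congr 1; ring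
    have h1 : (n ! : ℝ) ≠ 0 := by positivity
    have h2 : (s ! : ℝ) ≠ 0 := by positivity
    have h3 : ((n - s)! : ℝ) ≠ 0 := by positivity
    rw [he, w, w]
    push_cast
    field_simp
  rw [← hsum, w, hk]
  have h1 : (n ! : ℝ) ≠ 0 := by positivity
  have hr' : (2 * ((m : ℝ) + 1) * cg (Fin n) (m + 1) + 2 * m * cg (Fin n) m : ℝ) =
      n * (n - 1) * cg (Fin n) m + ((∑ s ∈ Finset.range (n + 1), n.choose s •
      ∑ p ∈ Finset.HasAntidiagonal.antidiagonal m,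
          s * (n - s) * (cg (Fin s) p.1 * cg (Fin (n - s)) p.2) : ℕ) : ℝ) := by
    have hn : ((n : ℝ) * (n - 1) : ℝ) = ((n * (n - 1) : ℕ) : ℝ) := by
      rcases n with _ | n <;> simp
    rw [hn]
    exact_mod_cast hr
  field_simp
  linear_combination hr'

/-- The recurrence for trees, where deleting an edge always disconnects. -/
lemma w_rec_zero (n : ℕ) :
    2 * ((n : ℝ) - 1) * w 0 n = PowerSeries.coeff n (U 0 * U 0) := by
  rcases n with _ | _ | m
  · simp [w_zero, U]
  · simp [U, PowerSeries.coeff_mul, Finset.Nat.antidiagonal_succ]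
  · have := w_rec (n := m + 2) (m := m) (k := 0) rfl
    rw [cg_eq_zero (by omega)] at this
    simp only [Nat.cast_zero, zero_div, zero_mul, mul_zero, zero_add,
      Finset.HasAntidiagonal.antidiagonal_zero, Finset.sum_singleton] at this
    rw [← this]
    push_cast
    ring

/-- The recurrence from excess `k` to excess `k + 1`. -/
lemma w_rec_succ (k n : ℕ) :
    2 * ((n : ℝ) + k) * w (k + 1) n = ((n : ℝ) * (n - 1) - 2 * (n + k - 1)) * w k n +
      ∑ p ∈ Finset.HasAntidiagonal.antidiagonal (k + 1),
        PowerSeries.coeff n (U p.1 * U p.2) := by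
  rcases n with _ | n
  · simp [w_zero, U]
  · have := w_rec (n := n + 1) (m := n + k) (k := k + 1) (by omega)
    have e : connGraphCount (n + 1) k = cg (Fin (n + 1)) (n + k) := by
      have h : n + 1 + k - 1 = n + k := by omega
      rw [connGraphCount, cg, h]
    have hw : w k (n + 1) =
        connGraphCount (n + 1) k / (n + 1)! * Real.exp (-((n + 1 : ℕ) : ℝ)) := rfl
    rw [← e, ← hw] at this
    push_cast at *
    linear_combination this

/-! ### Trees -/

/-- A case of Abel's binomial identity. Both sides are polynomials in `x`; they agree at `x = 0`
because the `n`-th finite difference of a polynomial of degree below `n` vanishes, and their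
derivatives agree by induction. -/
lemma abel (n : ℕ) (x : ℝ) :
    ∑ j ∈ Finset.range (n + 1), ((n + 1).choose (j + 1) : ℝ) * ((j : ℝ) + 1) ^ j *
      (x - (j + 1)) ^ (n - j) = (n + 1) * x ^ n := by
  induction n generalizing x with
  | zero => simp
  | succ n ih =>
    set F : ℝ → ℝ := fun x => ∑ j ∈ Finset.range (n + 1 + 1),
      ((n + 1 + 1).choose (j + 1) : ℝ) * ((j : ℝ) + 1) ^ j * (x - (j + 1)) ^ (n + 1 - j) -
        ((n : ℝ) + 1 + 1) * x ^ (n + 1) with hF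
    have hd : ∀ x, HasDerivAt F 0 x := by
      intro x
      have h1 : HasDerivAt F (∑ j ∈ Finset.range (n + 1 + 1),
          ((n + 1 + 1).choose (j + 1) : ℝ) * ((j : ℝ) + 1) ^ j *
            (((n + 1 - j : ℕ) : ℝ) * (x - (j + 1)) ^ (n + 1 - j - 1) * 1) -
          ((n : ℝ) + 1 + 1) * (((n + 1 : ℕ) : ℝ) * x ^ n)) x := by
        refine HasDerivAt.sub (HasDerivAt.fun_sum fun j _ => ?_) ?_
        · exact (((hasDerivAt_id x).sub_const _).pow _).const_mul _
        · exact (hasDerivAt_pow (n + 1) x).const_mul _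
      convert h1 using 1
      rw [Finset.sum_range_succ, ← sub_eq_zero.2 (congrArg (fun t => ((n : ℝ) + 1 + 1) * t) (ih x)),
        Finset.mul_sum]
      simp only [le_refl, tsub_eq_zero_of_le, Nat.cast_zero, zero_mul, mul_zero, add_zero]
      push_cast
      congr 1
      refine Finset.sum_congr rfl fun j hj => ?_
      have hj' : j ≤ n := Nat.lt_succ_iff.1 (Finset.mem_range.1 hj)
      have hc : ((n + 1 + 1).choose (j + 1) : ℝ) * ((n + 1 - j : ℕ) : ℝ) =
          ((n : ℝ) + 1 + 1) * ((n + 1).choose (j + 1) : ℝ) := by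
        have := Nat.choose_mul_succ_eq (n + 1) (j + 1)
        rw [show n + 1 + 1 - (j + 1) = n + 1 - j by omega] at this
        have h2 : (((n + 1).choose (j + 1) * (n + 1 + 1) : ℕ) : ℝ) = _ :=
          congrArg (Nat.cast : ℕ → ℝ) this
        push_cast at h2
        linear_combination -h2
      rw [show n + 1 - j - 1 = n - j by omega]
      linear_combination -(((j : ℝ) + 1) ^ j * (x - (j + 1)) ^ (n - j)) * hc
    have h0 : F 0 = 0 := by
      have h := congrFun (fwdDiff_iter_pow_eq_zero_of_lt (R := ℝ) (Nat.lt_succ_self (n + 1))) 0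
      rw [fwdDiff_iter_eq_sum_shift, Finset.sum_range_succ'] at h
      simp only [hF, zero_sub, ne_eq, Nat.succ_ne_zero, not_false_eq_true, zero_pow, mul_zero,
        sub_zero]
      simp only [zero_add, Pi.zero_apply, nsmul_eq_mul, mul_one, zsmul_eq_mul, Nat.cast_zero,
        ne_eq, Nat.succ_ne_zero, not_false_eq_true, zero_pow, mul_zero, add_zero] at h
      rw [← h]
      refine Finset.sum_congr rfl fun j hj => ?_
      have hj' : j ≤ n + 1 := Nat.lt_succ_iff.1 (Finset.mem_range.1 hj)
      rw [neg_pow, show n + 1 + 1 - (j + 1) = n + 1 - j by omega]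
      have hp : ((j : ℝ) + 1) ^ (n + 1) = ((j : ℝ) + 1) ^ j * ((j : ℝ) + 1) ^ (n + 1 - j) := by
        rw [← pow_add]; congr 1; omega
      push_cast
      rw [hp]
      ring
    have h := is_const_of_deriv_eq_zero (fun x => (hd x).differentiableAt)
      (fun x => (hd x).deriv) x 0
    rw [h0] at h
    have := sub_eq_zero.1 h
    push_cast
    exact this

/-- The rooted tree function `T(x / e)`, that is, the generating function of `n^(n-1) / (n! eⁿ)`.
The constant coefficient is set to zero explicitly, since `0 ^ (0 - 1) = 1` in the natural
numbers. -/
noncomputable def tree : PowerSeries ℝ :=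
  PowerSeries.mk fun n => (n : ℝ) ^ (n - 1) / n ! * Real.exp (-n) * if n = 0 then 0 else 1

/-- The generating function of `nⁿ / (n! eⁿ)`; it equals `1 / (1 - T(x / e))`. -/
noncomputable def P : PowerSeries ℝ := PowerSeries.mk fun n => (n : ℝ) ^ n / n ! * Real.exp (-n)

lemma coeff_tree_zero : PowerSeries.coeff 0 tree = 0 := by simp [tree]

lemma coeff_tree_succ (n : ℕ) : PowerSeries.coeff (n + 1) tree =
    ((n : ℝ) + 1) ^ n / (n + 1)! * Real.exp (-(n + 1)) := by simp [tree]

lemma coeff_P (n : ℕ) : PowerSeries.coeff n P = (n : ℝ) ^ n / n ! * Real.exp (-n) := by simp [P]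

lemma coeff_P_succ (n : ℕ) : PowerSeries.coeff (n + 1) P =
    ((n : ℝ) + 1) * PowerSeries.coeff (n + 1) tree := by
  rw [coeff_P, coeff_tree_succ]; push_cast; ring

/-- The identity `(1 - T) P = 1`, from Abel's identity at `x = n + 1`. -/
lemma tree_mul_P : tree * P = P - 1 := by
  ext n
  rcases n with _ | n
  · simp [P, tree]
  rw [PowerSeries.coeff_mul, Finset.Nat.sum_antidiagonal_eq_sum_range_succ_mk,
    Finset.sum_range_succ', coeff_tree_zero, zero_mul, add_zero, map_sub, PowerSeries.coeff_one,
    if_neg (Nat.succ_ne_zero n), sub_zero, coeff_P]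
  have h := abel n ((n : ℝ) + 1)
  have hn : ((n + 1)! : ℝ) ≠ 0 := by positivity
  have : ((n + 1 : ℕ) : ℝ) ^ (n + 1) = ((n : ℝ) + 1) * ((n : ℝ) + 1) ^ n := by push_cast; ring
  rw [this, ← h, Finset.sum_div, Finset.sum_mul]
  refine Finset.sum_congr rfl fun j hj => ?_
  have hj' : j ≤ n := Nat.lt_succ_iff.1 (Finset.mem_range.1 hj)
  obtain ⟨i, rfl⟩ := Nat.exists_eq_add_of_le hj'
  rw [coeff_tree_succ, coeff_P, Nat.cast_choose ℝ (by omega : j + 1 ≤ j + i + 1),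
    show j + i + 1 - (j + 1) = i by omega, show j + i - j = i by omega]
  have he : Real.exp (-((j + i + 1 : ℕ) : ℝ)) = Real.exp (-((j : ℝ) + 1)) * Real.exp (-(i : ℝ)) := by
    rw [← Real.exp_add]; congr 1; push_cast; ring
  have h2 : ((j + 1)! : ℝ) ≠ 0 := by positivity
  have h3 : (i ! : ℝ) ≠ 0 := by positivity
  rw [he]
  push_cast
  rw [show (j : ℝ) + i + 1 - (j + 1) = i by ring]
  field_simp

/-- The tree function satisfies the same quadratic recurrence as `U 0`: from
`(1 - T) θT = T` one gets `θ(T²) = 2 θT - 2 T`. -/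
lemma tree_rec (n : ℕ) : 2 * ((n : ℝ) - 1) * PowerSeries.coeff n tree =
    n * PowerSeries.coeff n (tree * tree) := by
  have hP : PowerSeries.X * PowerSeries.derivative ℝ tree = P - 1 := by
    ext n
    rcases n with _ | n
    · simp [P]
    · rw [PowerSeries.coeff_succ_X_mul, PowerSeries.coeff_derivative, map_sub,
        PowerSeries.coeff_one, if_neg (Nat.succ_ne_zero n), coeff_P_succ]
      ring
  have h : PowerSeries.X * PowerSeries.derivative ℝ (tree * tree) =
      2 * (PowerSeries.X * PowerSeries.derivative ℝ tree) - 2 * tree := by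
    rw [Derivation.leibniz, smul_eq_mul]
    linear_combination (2 * tree - 2) * hP + 2 * tree_mul_P
  rcases n with _ | n
  · simp [coeff_tree_zero]
  have := congrArg (PowerSeries.coeff (n + 1)) h
  rw [map_sub, two_mul, two_mul, map_add, map_add, PowerSeries.coeff_succ_X_mul,
    PowerSeries.coeff_derivative,
    PowerSeries.coeff_succ_X_mul, PowerSeries.coeff_derivative] at this
  push_cast
  linear_combination -this

/-- Cayley's formula, in generating function form: both sides satisfy the same recurrence. -/
lemma U_zero : U 0 = tree := by
  ext n
  induction n using Nat.strong_induction_on with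
  | _ n ih =>
    rcases n with _ | _ | n
    · simp [U, tree]
    · simp [U, tree, w, connGraphCount_one_zero]
    · have h1 := w_rec_zero (n + 1 + 1)
      have h2 := tree_rec (n + 1 + 1)
      have h3 : PowerSeries.coeff (n + 1 + 1) (U 0 * U 0) =
          PowerSeries.coeff (n + 1 + 1) (tree * tree) := by
        rw [PowerSeries.coeff_mul, PowerSeries.coeff_mul]
        refine Finset.sum_congr rfl fun p hp => ?_
        rw [Finset.HasAntidiagonal.mem_antidiagonal] at hp
        rcases Nat.eq_zero_or_pos p.1 with h | h
        · simp [h, coeff_tree_zero, U]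
        rcases Nat.eq_zero_or_pos p.2 with h' | h'
        · simp [h', coeff_tree_zero, U]
        rw [ih _ (by omega), ih _ (by omega)]
      rw [h3] at h1
      have h4 : (0 : ℝ) < ((n + 1 + 1 : ℕ) : ℝ) - 1 := by
        push_cast
        linarith [(n.cast_nonneg : (0 : ℝ) ≤ n)]
      have h5 : PowerSeries.coeff (n + 1 + 1) (U 0) =
        ((n + 1 + 1 : ℕ) : ℝ) * w 0 (n + 1 + 1) := by rw [U, PowerSeries.coeff_mk]
      rw [h5]
      refine mul_left_cancel₀ h4.ne' ?_
      linear_combination (((n + 1 + 1 : ℕ) : ℝ) * h1 - h2) / 2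

/-! ### The comparison series -/

open PowerSeries (coeff)

/-- The power series of `(1 - x)^(-1/2)`, whose powers serve as comparison series. -/
noncomputable def B : PowerSeries ℝ := PowerSeries.mk fun n => (n.centralBinom : ℝ) / 4 ^ n

/-- The differential equation `(1 - x) B' = B / 2`. -/
lemma derivative_B_aux : (1 - PowerSeries.X) * PowerSeries.derivative ℝ B =
    PowerSeries.C (1 / 2 : ℝ) * B := by
  ext n
  have h : ((n : ℝ) + 1) * (n + 1).centralBinom = 2 * (2 * n + 1) * n.centralBinom := by
    exact_mod_cast Nat.succ_mul_centralBinom_succ n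
  rw [sub_mul, one_mul, map_sub, PowerSeries.coeff_derivative, PowerSeries.coeff_C_mul]
  rcases n with _ | n
  · simp [B] at h ⊢
    rw [h]
    norm_num
  · rw [PowerSeries.coeff_succ_X_mul, PowerSeries.coeff_derivative]
    simp only [B, PowerSeries.coeff_mk]
    push_cast at h ⊢
    rw [pow_succ (4 : ℝ) (n + 1)]
    field_simp
    linear_combination 2 * h

lemma coeff_B_sq (n : ℕ) : coeff n (B ^ 2) = 1 := by
  have h : (1 - PowerSeries.X) * PowerSeries.derivative ℝ (B ^ 2) = B ^ 2 := by
    have h2 : (2 : PowerSeries ℝ) * PowerSeries.C (1 / 2 : ℝ) = 1 := by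
      rw [← map_ofNat (PowerSeries.C (R := ℝ)) 2, ← map_mul]; norm_num
    rw [sq, Derivation.leibniz, smul_eq_mul]
    linear_combination 2 * B * derivative_B_aux + B ^ 2 * h2
  induction n with
  | zero => simp [B, sq]
  | succ n ih =>
    have := congrArg (coeff n) h
    rw [sub_mul, one_mul, map_sub, PowerSeries.coeff_derivative] at this
    have h3 : (coeff n (PowerSeries.X * PowerSeries.derivative ℝ (B ^ 2)) : ℝ) = n := by
      rcases n with _ | n
      · simp
      · rw [PowerSeries.coeff_succ_X_mul, PowerSeries.coeff_derivative, ih]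
        push_cast; ring
    rw [h3, ih] at this
    have h4 : ((n : ℝ) + 1) ≠ 0 := by positivity
    refine mul_right_cancel₀ h4 ?_
    linarith

lemma one_sub_X_mul_B_sq : (1 - PowerSeries.X) * B ^ 2 = 1 := by
  ext n
  rw [sub_mul, one_mul, map_sub, coeff_B_sq, PowerSeries.coeff_one]
  rcases n with _ | n
  · simp
  · rw [PowerSeries.coeff_succ_X_mul, coeff_B_sq]; simp

lemma derivative_B_pow (h : ℕ) : PowerSeries.derivative ℝ (B ^ h) =
    PowerSeries.C ((h : ℝ) / 2) * B ^ (h + 2) := by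
  have hB : PowerSeries.derivative ℝ B = PowerSeries.C (1 / 2 : ℝ) * B ^ 3 := by
    linear_combination B ^ 2 * derivative_B_aux -
      (PowerSeries.derivative ℝ B) * one_sub_X_mul_B_sq
  rcases h with _ | h
  · simp
  have hC : PowerSeries.C (((h + 1 : ℕ) : ℝ) / 2) =
      ((h + 1 : ℕ) : PowerSeries ℝ) * PowerSeries.C (1 / 2 : ℝ) := by
    rw [div_eq_mul_one_div, map_mul, map_natCast]
  rw [Derivation.leibniz_pow, smul_eq_mul, hB, nsmul_eq_mul, hC]
  simp only [Nat.add_sub_cancel]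
  ring

/-- The derivative of `(1 - x)^(-h/2)` is `h/2` times `(1 - x)^(-(h+2)/2)`. -/
lemma coeff_B_pow_succ (h n : ℕ) :
    ((n : ℝ) + 1) * coeff (n + 1) (B ^ h) = h / 2 * coeff n (B ^ (h + 2)) := by
  have := congrArg (coeff n) (derivative_B_pow h)
  rw [PowerSeries.coeff_derivative, PowerSeries.coeff_C_mul] at this
  linarith

lemma coeff_B_pow_pos (h n : ℕ) : 0 < coeff n (B ^ (h + 1)) := by
  have h0 (n : ℕ) : 0 < coeff n B := by
    rw [B, PowerSeries.coeff_mk]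
    have := Nat.centralBinom_pos n
    positivity
  induction h generalizing n with
  | zero => simpa using h0 n
  | succ h ih =>
    rw [pow_succ, PowerSeries.coeff_mul]
    exact Finset.sum_pos (fun p _ => mul_pos (ih _) (h0 _))
      ⟨(0, n), by simp [Finset.HasAntidiagonal.mem_antidiagonal]⟩

/-- Stirling's formula. -/
lemma tendsto_P_sqrt :
    Tendsto (fun n : ℕ => coeff n P * √n) atTop (nhds (1 / (√2 * √Real.pi))) := by
  have h := (Stirling.tendsto_stirlingSeq_sqrt_pi.const_mul √2).inv₀ (by positivity)
  rw [← one_div] at h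
  refine h.congr' ?_
  filter_upwards [eventually_gt_atTop 0] with n hn
  have hn' : (0 : ℝ) < n := by exact_mod_cast hn
  rw [coeff_P, Stirling.stirlingSeq, Real.sqrt_mul (by norm_num), Real.exp_neg, div_pow,
    ← Real.exp_nat_mul, mul_one]
  have : √(n : ℝ) ≠ 0 := by positivity
  have : (n ! : ℝ) ≠ 0 := by positivity
  field_simp

lemma tendsto_B_sqrt :
    Tendsto (fun n : ℕ => coeff n B * √n) atTop (nhds (1 / √Real.pi)) := by
  have h2 : Tendsto (fun n : ℕ => Stirling.stirlingSeq (2 * n)) atTop (nhds √Real.pi) :=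
    Stirling.tendsto_stirlingSeq_sqrt_pi.comp (tendsto_id.const_mul_atTop' (by norm_num))
  have h := h2.div (Stirling.tendsto_stirlingSeq_sqrt_pi.pow 2) (by positivity)
  rw [show √Real.pi / √Real.pi ^ 2 = 1 / √Real.pi by field_simp] at h
  refine h.congr' ?_
  filter_upwards [eventually_gt_atTop 0] with n hn
  have hn' : (0 : ℝ) < n := by exact_mod_cast hn
  rw [B, PowerSeries.coeff_mk, Pi.div_apply, Stirling.stirlingSeq, Stirling.stirlingSeq,
    Nat.centralBinom, Nat.cast_choose ℝ (by omega : n ≤ 2 * n), show 2 * n - n = n by omega,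
    Real.sqrt_mul (by norm_num), Real.sqrt_mul (by norm_num)]
  have h3 : √(n : ℝ) ≠ 0 := by positivity
  have h4 : (n ! : ℝ) ≠ 0 := by positivity
  rw [show √((2 * n : ℕ) : ℝ) = √2 * √(n : ℝ) by
    push_cast; rw [Real.sqrt_mul (by norm_num)]]
  push_cast
  rw [show (4 : ℝ) = 2 ^ 2 by norm_num]
  simp only [div_pow, mul_pow, ← pow_mul]
  rw [mul_comm n 2]
  field_simp

/-- The coefficients of `(1 - x)^(-(h+1)/2)` have order `n^((h+1)/2 - 1)`. The two starting cases
are Stirling's formula and the geometric series; differentiation raises `h` by `2`. -/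
lemma tendsto_B_pow (h : ℕ) : ∃ c : ℝ, 0 < c ∧
    Tendsto (fun n : ℕ => coeff n (B ^ (h + 1)) / (n : ℝ) ^ (((h : ℝ) + 1) / 2 - 1)) atTop
      (nhds c) := by
  induction h using Nat.strong_induction_on with
  | _ h ih =>
    rcases h with _ | _ | h
    · refine ⟨_, by positivity, tendsto_B_sqrt.congr fun n => ?_⟩
      rw [Real.sqrt_eq_rpow, show (((0 : ℕ) : ℝ) + 1) / 2 - 1 = -(1 / 2) by norm_num,
        Real.rpow_neg (by positivity), div_inv_eq_mul, zero_add, pow_one]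
    · refine ⟨1, one_pos, tendsto_const_nhds.congr fun n => ?_⟩
      rw [zero_add, coeff_B_sq]
      norm_num
    · obtain ⟨c, hc, hlim⟩ := ih h (by omega)
      have hs := hlim.comp (tendsto_add_atTop_nat 1)
      have hr : Tendsto (fun n : ℕ => ((((n + 1 : ℕ) : ℝ)) / n) ^ (((h : ℝ) + 1) / 2)) atTop
          (nhds (1 ^ (((h : ℝ) + 1) / 2))) := by
        refine Tendsto.rpow_const ?_ (Or.inl one_ne_zero)
        have := (tendsto_one_div_atTop_nhds_zero_nat (𝕜 := ℝ)).const_add 1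
        rw [add_zero] at this
        refine this.congr' ?_
        filter_upwards [eventually_gt_atTop 0] with n hn
        have hn' : (0 : ℝ) < n := by exact_mod_cast hn
        push_cast
        field_simp
      rw [Real.one_rpow] at hr
      have h1 := (hs.mul hr).const_mul (2 / ((h : ℝ) + 1))
      refine ⟨_, ?_, h1.congr' ?_⟩
      · positivity
      · filter_upwards [eventually_gt_atTop 0] with n hn
        have hn' : (0 : ℝ) < n := by exact_mod_cast hn
        have := coeff_B_pow_succ (h + 1) n
        simp only [Function.comp_apply]
        rw [Real.div_rpow (by positivity) (by positivity)]
        have e1 : ((n + 1 : ℕ) : ℝ) ^ (((h : ℝ) + 1) / 2) =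
            ((n + 1 : ℕ) : ℝ) ^ (((h : ℝ) + 1) / 2 - 1) * (n + 1) := by
          rw [Real.rpow_sub_one (by positivity)]
          push_cast
          field_simp
        have e2 : (((h + 1 + 1 : ℕ) : ℝ) + 1) / 2 - 1 = ((h : ℝ) + 1) / 2 := by push_cast; ring
        rw [e1, e2]
        have p1 : (0 : ℝ) < ((n + 1 : ℕ) : ℝ) ^ (((h : ℝ) + 1) / 2 - 1) := by positivity
        have p2 : (0 : ℝ) < (n : ℝ) ^ (((h : ℝ) + 1) / 2) := by positivity
        push_cast at this p1 ⊢
        rw [show h + 1 + 1 + 1 = h + 1 + 2 by rfl]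
        field_simp
        linear_combination 2 * this

lemma tendsto_B_pow_shift (h i : ℕ) :
    Tendsto (fun n : ℕ => coeff n (B ^ (h + 1)) / coeff (n + i) (B ^ (h + 1))) atTop (nhds 1) := by
  induction i with
  | zero =>
    refine tendsto_const_nhds.congr fun n => ?_
    rw [add_zero, div_self (coeff_B_pow_pos _ _).ne']
  | succ i ih =>
    obtain ⟨c, hc, hlim⟩ := tendsto_B_pow h
    have hstep : Tendsto (fun n : ℕ => coeff n (B ^ (h + 1)) / coeff (n + 1) (B ^ (h + 1))) atTop
        (nhds 1) := by
      have hr : Tendsto (fun n : ℕ => ((n : ℝ) / ((n + 1 : ℕ) : ℝ)) ^ (((h : ℝ) + 1) / 2 - 1)) atTop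
          (nhds (1 ^ (((h : ℝ) + 1) / 2 - 1))) := by
        refine Tendsto.rpow_const ?_ (Or.inl one_ne_zero)
        simpa using tendsto_natCast_div_add_atTop (1 : ℝ)
      have := (hlim.div (hlim.comp (tendsto_add_atTop_nat 1)) hc.ne').mul hr
      rw [div_self hc.ne', Real.one_rpow, mul_one] at this
      refine this.congr' ?_
      filter_upwards [eventually_gt_atTop 0] with n hn
      have hn' : (0 : ℝ) < n := by exact_mod_cast hn
      simp only [Function.comp_apply, Pi.div_apply]
      rw [Real.div_rpow (by positivity) (by positivity)]
      have p1 : (0 : ℝ) < ((n + 1 : ℕ) : ℝ) ^ (((h : ℝ) + 1) / 2 - 1) := by positivity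
      have p2 : (0 : ℝ) < (n : ℝ) ^ (((h : ℝ) + 1) / 2 - 1) := by positivity
      have p3 := coeff_B_pow_pos h (n + 1)
      field_simp
    have := ih.mul (hstep.comp (tendsto_add_atTop_nat i))
    rw [mul_one] at this
    refine this.congr fun n => ?_
    have p3 := coeff_B_pow_pos h (n + i)
    simp only [Function.comp_apply, add_assoc] at p3 ⊢
    field_simp

lemma tendsto_B_pow_gap (h i : ℕ) :
    Tendsto (fun n : ℕ => coeff n (B ^ (h + 1)) / coeff n (B ^ (h + i + 2))) atTop (nhds 0) := by
  obtain ⟨c, hc, hlim⟩ := tendsto_B_pow h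
  obtain ⟨d, hd, hlim'⟩ := tendsto_B_pow (h + i + 1)
  have hr : Tendsto (fun n : ℕ => (n : ℝ) ^ (-(((i : ℝ) + 1) / 2))) atTop (nhds 0) :=
    (tendsto_rpow_neg_atTop (by positivity)).comp tendsto_natCast_atTop_atTop
  have := (hlim.div hlim' hd.ne').mul hr
  rw [mul_zero] at this
  refine this.congr' ?_
  filter_upwards [eventually_gt_atTop 0] with n hn
  have hn' : (0 : ℝ) < n := by exact_mod_cast hn
  have e : (n : ℝ) ^ (-(((i : ℝ) + 1) / 2)) =
      (n : ℝ) ^ (((h : ℝ) + 1) / 2 - 1) / (n : ℝ) ^ ((((h + i + 1 : ℕ) : ℝ) + 1) / 2 - 1) := by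
    rw [← Real.rpow_sub hn']; congr 1; push_cast; ring
  rw [e, Pi.div_apply]
  have p1 : (0 : ℝ) < (n : ℝ) ^ ((((h + i + 1 : ℕ) : ℝ) + 1) / 2 - 1) := by positivity
  have p2 : (0 : ℝ) < (n : ℝ) ^ (((h : ℝ) + 1) / 2 - 1) := by positivity
  have p3 := coeff_B_pow_pos (h + i + 1) n
  field_simp

/-! ### Calculus of coefficient asymptotics -/

/-- `Asy F h L`: the coefficients of `F` are asymptotic to `L` times those of
`(1 - x)^(-h/2)` (negligible compared with them if `L = 0`). -/
def Asy (F : PowerSeries ℝ) (h : ℕ) (L : ℝ) : Prop :=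
  Tendsto (fun n : ℕ => coeff n F / coeff n (B ^ h)) atTop (nhds L)

lemma Asy.add {F G : PowerSeries ℝ} {h : ℕ} {L M : ℝ} (hF : Asy F h L) (hG : Asy G h M) :
    Asy (F + G) h (L + M) :=
  (Tendsto.add hF hG).congr fun n => by rw [map_add, add_div]

lemma Asy.smul {F : PowerSeries ℝ} {h : ℕ} {L : ℝ} (c : ℝ) (hF : Asy F h L) :
    Asy (PowerSeries.C c * F) h (c * L) :=
  (Tendsto.const_mul c hF).congr fun n => by rw [PowerSeries.coeff_C_mul, mul_div_assoc]

lemma asy_zero (h : ℕ) : Asy 0 h 0 := by simp [Asy]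

lemma asy_B (h : ℕ) : Asy (B ^ (h + 1)) (h + 1) 1 :=
  tendsto_const_nhds.congr fun n => (div_self (coeff_B_pow_pos h n).ne').symm

lemma Asy.bound {F : PowerSeries ℝ} {h : ℕ} {L : ℝ} (hF : Asy F (h + 1) L) :
    ∃ M : ℝ, 0 < M ∧ ∀ n, |coeff n F| ≤ M * coeff n (B ^ (h + 1)) := by
  obtain ⟨M, hM⟩ := (Tendsto.abs hF).bddAbove_range
  refine ⟨max M 1, by positivity, fun n => ?_⟩
  have h1 := hM (Set.mem_range_self n)
  rw [abs_div, abs_of_pos (coeff_B_pow_pos h n), div_le_iff₀ (coeff_B_pow_pos h n)] at h1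
  exact h1.trans (mul_le_mul_of_nonneg_right (le_max_left _ _) (coeff_B_pow_pos h n).le)

/-- A negligible factor makes the product negligible: up to finitely many initial coefficients
`E` is dominated by `ε (1 - x)^(-(a + 1)/2)`, and the finitely many initial coefficients only
contribute shifts of `(1 - x)^(-(b + 1)/2)`. -/
lemma Asy.mul_zero {E G : PowerSeries ℝ} {a b : ℕ} {M : ℝ} (hE : Asy E (a + 1) 0)
    (hG : Asy G (b + 1) M) : Asy (E * G) (a + b + 2) 0 := by
  obtain ⟨K, hK, hGK⟩ := hG.bound
  refine squeeze_zero_norm' (a := fun n => |coeff n (E * G)| / coeff n (B ^ (a + b + 2))) ?_ ?_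
  · refine Eventually.of_forall fun n => ?_
    rw [Real.norm_eq_abs, abs_div, abs_of_pos (coeff_B_pow_pos (a + b + 1) n)]
  rw [Metric.tendsto_atTop]
  intro ε hε
  have hη : 0 < ε / (2 * K) := by positivity
  obtain ⟨N, hN⟩ := (Metric.tendsto_atTop.1 hE) _ hη
  have hsmall : Tendsto (fun n : ℕ => ∑ i ∈ Finset.range N,
      |coeff i E| * K * (coeff (n - i) (B ^ (b + 1)) / coeff n (B ^ (a + b + 2)))) atTop
      (nhds (∑ i ∈ Finset.range N, |coeff i E| * K * 0)) := by
    refine tendsto_finsetSum _ fun i _ => Tendsto.const_mul _ ?_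
    rw [← tendsto_add_atTop_iff_nat i]
    have h1 := (tendsto_B_pow_gap b a).mul (tendsto_B_pow_shift (a + b + 1) i)
    rw [zero_mul] at h1
    refine h1.congr fun n => ?_
    have p1 := coeff_B_pow_pos (a + b + 1) n
    have p2 := coeff_B_pow_pos (a + b + 1) (n + i)
    rw [Nat.add_sub_cancel, show b + a + 2 = a + b + 1 + 1 by omega]
    field_simp
  simp only [MulZeroClass.mul_zero, Finset.sum_const_zero] at hsmall
  obtain ⟨N', hN'⟩ := (Metric.tendsto_atTop.1 hsmall) (ε / 2) (by positivity)
  refine ⟨max N N', fun n hn => ?_⟩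
  have hnN : N ≤ n := (le_max_left _ _).trans hn
  have h2 := hN' n ((le_max_right _ _).trans hn)
  have pn := coeff_B_pow_pos (a + b + 1) n
  rw [Real.dist_eq, sub_zero] at h2 ⊢
  have h3 := (le_abs_self _).trans_lt h2
  rw [abs_of_nonneg (by positivity), div_lt_iff₀ pn]
  have key : |coeff n (E * G)| ≤ ε / (2 * K) * K * coeff n (B ^ (a + b + 2)) +
      ∑ i ∈ Finset.range N, |coeff i E| * K * coeff (n - i) (B ^ (b + 1)) := by
    have hB : B ^ (a + b + 2) = B ^ (a + 1) * B ^ (b + 1) := by rw [← pow_add]; congr 1; omega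
    rw [hB, PowerSeries.coeff_mul, PowerSeries.coeff_mul,
      Finset.Nat.sum_antidiagonal_eq_sum_range_succ_mk,
      Finset.Nat.sum_antidiagonal_eq_sum_range_succ_mk, Finset.mul_sum]
    have hsub : Finset.range N ⊆ Finset.range (n + 1) :=
      Finset.range_subset_range.2 (by omega)
    rw [← Finset.inter_eq_right.2 hsub, ← Finset.sum_ite_mem, ← Finset.sum_add_distrib]
    refine (Finset.abs_sum_le_sum_abs _ _).trans (Finset.sum_le_sum fun i _ => ?_)
    have p1 := coeff_B_pow_pos a i
    have p2 := coeff_B_pow_pos b (n - i)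
    have g := mul_le_mul_of_nonneg_left (hGK (n - i)) (abs_nonneg (coeff i E))
    rw [abs_mul]
    by_cases hi : i ∈ Finset.range N
    · rw [if_pos hi]
      have : 0 ≤ ε / (2 * K) * K * (coeff i (B ^ (a + 1)) * coeff (n - i) (B ^ (b + 1))) := by
        positivity
      simp only at this ⊢
      linarith
    · rw [if_neg hi, add_zero]
      have h4 := hN i (by simpa using hi)
      rw [Real.dist_eq, sub_zero, abs_div, abs_of_pos p1, div_lt_iff₀ p1] at h4
      have := mul_le_mul_of_nonneg_right h4.le (by positivity :
        0 ≤ K * coeff (n - i) (B ^ (b + 1)))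
      simp only at this ⊢
      linarith
  have h5 : ∑ i ∈ Finset.range N, |coeff i E| * K * coeff (n - i) (B ^ (b + 1)) <
      ε / 2 * coeff n (B ^ (a + b + 2)) := by
    rw [← div_lt_iff₀ pn, Finset.sum_div]
    simpa only [mul_div_assoc] using h3
  have h6 : ε / (2 * K) * K = ε / 2 := by field_simp
  rw [h6] at key
  linarith

lemma Asy.mul {F G : PowerSeries ℝ} {a b : ℕ} {L M : ℝ} (hF : Asy F (a + 1) L)
    (hG : Asy G (b + 1) M) : Asy (F * G) (a + b + 2) (L * M) := by
  have hF0 := hF.add ((asy_B a).smul (-L))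
  have hG0 := hG.add ((asy_B b).smul (-M))
  rw [mul_one, add_neg_cancel] at hF0 hG0
  have h1 := hF0.mul_zero hG
  have h2 := (hG0.mul_zero (asy_B a)).smul L
  have h3 := (asy_B (a + b + 1)).smul (L * M)
  rw [show b + a + 2 = a + b + 2 by omega] at h2
  have h4 := (h1.add h2).add h3
  convert h4 using 1
  · have hB : B ^ (a + b + 1 + 1) = B ^ (a + 1) * B ^ (b + 1) := by
      rw [← pow_add]; congr 1; omega
    rw [hB, map_neg, map_neg, map_mul]
    ring
  · ring

/-- The Euler operator `θ = x d/dx`. -/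
noncomputable def theta (F : PowerSeries ℝ) : PowerSeries ℝ :=
  PowerSeries.mk fun n => n * coeff n F

lemma coeff_theta (F : PowerSeries ℝ) (n : ℕ) : coeff n (theta F) = n * coeff n F := by
  rw [theta, PowerSeries.coeff_mk]

lemma asy_theta_B (h : ℕ) : Asy (theta (B ^ (h + 1))) (h + 3) (((h : ℝ) + 1) / 2) := by
  rw [Asy, ← tendsto_add_atTop_iff_nat 1]
  have := (tendsto_B_pow_shift (h + 2) 1).const_mul (((h : ℝ) + 1) / 2)
  rw [mul_one] at this
  refine this.congr fun n => ?_
  have h1 := coeff_B_pow_succ (h + 1) n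
  rw [coeff_theta]
  push_cast at h1 ⊢
  rw [h1, mul_div_assoc]

lemma Asy.theta {F : PowerSeries ℝ} {h : ℕ} {L : ℝ} (hF : Asy F (h + 1) L) :
    Asy (theta F) (h + 3) (L * (((h : ℝ) + 1) / 2)) := by
  refine (Tendsto.mul hF (asy_theta_B h)).congr fun n => ?_
  have := coeff_B_pow_pos h n
  rw [coeff_theta, coeff_theta]
  field_simp

lemma asy_P : Asy P 1 (1 / √2) := by
  have h := tendsto_P_sqrt.div tendsto_B_sqrt (by positivity)
  rw [show 1 / (√2 * √Real.pi) / (1 / √Real.pi) = 1 / √2 by field_simp] at h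
  refine h.congr' ?_
  filter_upwards [eventually_gt_atTop 0] with n hn
  have hn' : (0 : ℝ) < n := by exact_mod_cast hn
  rw [pow_one, Pi.div_apply, mul_div_mul_right _ _ (by positivity)]

/-! ### Induction on the excess -/

/-- The exponential generating function of the connected graphs of excess `k`. -/
noncomputable def W (k : ℕ) : PowerSeries ℝ := PowerSeries.mk (w k)

lemma theta_W (k : ℕ) : theta (W k) = U k := by
  ext n; rw [coeff_theta, W, U, PowerSeries.coeff_mk, PowerSeries.coeff_mk]

/-- The term of the recurrence for excess `k + 1` which involves adding an edge to a connected
graph of excess `k`. -/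
noncomputable def X (k : ℕ) : PowerSeries ℝ :=
  PowerSeries.mk fun n => ((n : ℝ) * (n - 1) - 2 * (n + k - 1)) * w k n

/-- The term of the recurrence for excess `k + 1` which involves joining two connected graphs,
neither of which is a tree. -/
noncomputable def Y (k : ℕ) : PowerSeries ℝ := ∑ i ∈ Finset.range k, U (i + 1) * U (k - i)

/-- The recurrence, with the two terms in which a tree is attached solved for `U (k + 1)`. -/
lemma U_succ (k : ℕ) : PowerSeries.C 2 * U (k + 1) =
    P * (X k + Y k) + PowerSeries.C (-(2 * (k : ℝ))) * (P * W (k + 1)) := by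
  have h : PowerSeries.C 2 * U (k + 1) + PowerSeries.C (2 * k : ℝ) * W (k + 1) =
      X k + (Y k + tree * U (k + 1) + tree * U (k + 1)) := by
    ext n
    have hr := w_rec_succ k n
    have hs : ∑ p ∈ Finset.HasAntidiagonal.antidiagonal (k + 1), U p.1 * U p.2 =
        Y k + tree * U (k + 1) + tree * U (k + 1) := by
      rw [Finset.Nat.sum_antidiagonal_eq_sum_range_succ_mk, Finset.sum_range_succ,
        Finset.sum_range_succ', Nat.sub_self, Nat.sub_zero, U_zero, mul_comm (U (k + 1)) tree, Y]
      congr 2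
      refine Finset.sum_congr rfl fun i _ => ?_
      rw [Nat.add_sub_add_right]
    rw [← hs, map_add, map_add, PowerSeries.coeff_C_mul, PowerSeries.coeff_C_mul, map_sum,
      W, U, X, PowerSeries.coeff_mk, PowerSeries.coeff_mk, PowerSeries.coeff_mk, ← hr]
    ring
  have h2 : (2 : PowerSeries ℝ) = PowerSeries.C 2 := (map_ofNat _ 2).symm
  have h3 : PowerSeries.C (-(2 * (k : ℝ))) = -PowerSeries.C (2 * (k : ℝ)) := map_neg _ _
  rw [h3]
  rw [← h2] at h ⊢
  linear_combination P * h + 2 * U (k + 1) * tree_mul_P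

/-- The coefficients of `X k` are `n² - 3n - 2k + 2` times `w k n`, so `X k` is asymptotic to
`θ² W_k`. -/
lemma asy_X {k : ℕ} {h : ℕ} {L : ℝ} (hU : Asy (theta (U k)) h L) : Asy (X k) h L := by
  have h1 : Tendsto (fun n : ℕ => 1 - 3 * (1 / (n : ℝ)) + (2 - 2 * k) * (1 / (n : ℝ)) ^ 2) atTop
      (nhds (1 - 3 * 0 + (2 - 2 * (k : ℝ)) * 0 ^ 2)) := by
    have := tendsto_one_div_atTop_nhds_zero_nat (𝕜 := ℝ)
    exact ((this.const_mul 3).const_sub 1).add ((this.pow 2).const_mul _)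
  have h2 := Tendsto.mul hU h1
  rw [show L * (1 - 3 * 0 + (2 - 2 * (k : ℝ)) * 0 ^ 2) = L by ring] at h2
  refine h2.congr' ?_
  filter_upwards [eventually_gt_atTop 0] with n hn
  have hn' : (0 : ℝ) < n := by exact_mod_cast hn
  rw [coeff_theta, X, U, PowerSeries.coeff_mk, PowerSeries.coeff_mk, div_mul_eq_mul_div]
  congr 1
  field_simp
  ring

lemma asy_Y {k : ℕ} (hU : ∀ i < k, ∃ L : ℝ, 0 < L ∧ Asy (U (i + 1)) (3 * i + 2) L) :
    ∃ M : ℝ, 0 ≤ M ∧ Asy (Y k) (3 * k + 1) M := by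
  choose! L hL hLU using hU
  have key : ∀ s ⊆ Finset.range k, Asy (∑ i ∈ s, U (i + 1) * U (k - i)) (3 * k + 1)
      (∑ i ∈ s, L i * L (k - i - 1)) := by
    intro s
    induction s using Finset.induction_on with
    | empty => intro _; simpa using asy_zero _
    | insert i s his ih =>
      intro hs
      rw [Finset.insert_subset_iff, Finset.mem_range] at hs
      rw [Finset.sum_insert his, Finset.sum_insert his]
      refine Asy.add ?_ (ih hs.2)
      have := (hLU i hs.1).mul (hLU (k - i - 1) (by omega))
      rw [show k - i - 1 + 1 = k - i by omega] at this
      convert this using 1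
      omega
  refine ⟨_, Finset.sum_nonneg fun i hi => ?_, key _ subset_rfl⟩
  have hi' := Finset.mem_range.1 hi
  exact (mul_pos (hL _ hi') (hL _ (by omega))).le

lemma coeff_P_nonneg (n : ℕ) : 0 ≤ coeff n P := by rw [coeff_P]; positivity

/-- From excess at most `k` to excess `k + 1`. -/
lemma asy_step {k : ℕ} {L : ℝ} (hL : 0 < L) (h0 : Asy (theta (U k)) (3 * k + 1) L)
    (h1 : ∀ i < k, ∃ L : ℝ, 0 < L ∧ Asy (U (i + 1)) (3 * i + 2) L) :
    ∃ L : ℝ, 0 < L ∧ Asy (U (k + 1)) (3 * k + 2) L := by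
  obtain ⟨M, hM, hY⟩ := asy_Y h1
  have hD := asy_P.mul (a := 0) ((asy_X h0).add hY)
  rw [show 0 + 3 * k + 2 = 3 * k + 2 by omega] at hD
  -- A priori, `U (k + 1)` is dominated by the main term, because all coefficients are
  -- nonnegative; hence `W (k + 1)` is negligible.
  obtain ⟨K, hK, hDK⟩ := hD.bound
  have hle : ∀ n, coeff n (U (k + 1)) ≤ K / 2 * coeff n (B ^ (3 * k + 2)) := by
    intro n
    have h2 := congrArg (coeff n) (U_succ k)
    rw [map_add, PowerSeries.coeff_C_mul, PowerSeries.coeff_C_mul] at h2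
    have h3 : 0 ≤ coeff n (P * W (k + 1)) := by
      rw [PowerSeries.coeff_mul]
      refine Finset.sum_nonneg fun p _ => mul_nonneg (coeff_P_nonneg _) ?_
      rw [W, PowerSeries.coeff_mk]
      exact w_nonneg _ _
    have h4 : coeff n (P * (X k + Y k)) ≤ K * coeff n (B ^ (3 * k + 2)) :=
      (le_abs_self _).trans (hDK n)
    have h5 : 0 ≤ 2 * (k : ℝ) * coeff n (P * W (k + 1)) := by positivity
    linarith
  have hW : Asy (W (k + 1)) (3 * k + 1) 0 := by
    have hz := (((asy_theta_B (3 * k)).inv₀ (by positivity)).mul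
      (tendsto_B_pow_gap (3 * k + 1) 0)).const_mul (K / 2)
    rw [MulZeroClass.mul_zero, MulZeroClass.mul_zero] at hz
    refine squeeze_zero' ?_ ?_ hz
    · refine Eventually.of_forall fun n => div_nonneg ?_ (coeff_B_pow_pos _ n).le
      rw [W, PowerSeries.coeff_mk]
      exact w_nonneg _ _
    · filter_upwards [eventually_gt_atTop 0] with n hn
      have hn' : (0 : ℝ) < n := by exact_mod_cast hn
      have p1 := coeff_B_pow_pos (3 * k) n
      have p2 := coeff_B_pow_pos (3 * k + 1) n
      have p3 := coeff_B_pow_pos (3 * k + 2) n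
      have h2 := hle n
      rw [← theta_W, coeff_theta] at h2
      rw [coeff_theta]
      simp only [add_zero, add_assoc, Nat.reduceAdd] at p1 p2 p3 ⊢
      rw [div_le_iff₀ p1]
      field_simp
      linarith
  have hPW := (asy_P.mul (a := 0) hW).smul (-(2 * k))
  rw [show 0 + 3 * k + 2 = 3 * k + 2 by omega] at hPW
  have hU := (hD.add hPW).smul (1 / 2)
  rw [← U_succ, ← mul_assoc, ← map_mul] at hU
  norm_num at hU
  refine ⟨_, ?_, hU⟩
  positivity

lemma asy_U (k : ℕ) : (∃ L : ℝ, 0 < L ∧ Asy (theta (U k)) (3 * k + 1) L) ∧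
    ∀ i < k, ∃ L : ℝ, 0 < L ∧ Asy (U (i + 1)) (3 * i + 2) L := by
  induction k with
  | zero =>
    refine ⟨⟨1 / √2, by positivity, asy_P.congr' ?_⟩, by simp⟩
    filter_upwards [eventually_gt_atTop 0] with n hn
    obtain ⟨m, rfl⟩ := Nat.exists_eq_succ_of_ne_zero hn.ne'
    rw [coeff_theta, U_zero, Nat.succ_eq_add_one, coeff_P_succ]
    push_cast
    rfl
  | succ k ih =>
    obtain ⟨⟨L, hL, h0⟩, h1⟩ := ih
    obtain ⟨M, hM, h2⟩ := asy_step hL h0 h1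
    refine ⟨⟨_, by positivity, h2.theta⟩, fun i hi => ?_⟩
    rcases (Nat.lt_succ_iff.1 hi).eq_or_lt with rfl | hlt
    · exact ⟨M, hM, h2⟩
    · exact h1 i hlt

/-- **Wright's asymptotics for fixed `k`.**  For every fixed integer `k ≥ 0`, the
sequence `k! · C(n,k) / n^{n + 3k/2 - 2}` converges, as `n → ∞`, to a positive finite
limit (`k!` times the `k`-th Wright constant). -/
theorem stmt4 (k : ℕ) :
    ∃ L : ℝ, 0 < L ∧
      Tendsto (fun n : ℕ =>
          (k ! : ℝ) * (connGraphCount n k : ℝ) /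
            (n : ℝ) ^ ((n : ℝ) + 3 * (k : ℝ) / 2 - 2))
        atTop (nhds L) := by
  obtain ⟨L, hL, hU⟩ := (asy_U k).1
  obtain ⟨c, hc, hB⟩ := tendsto_B_pow (3 * k)
  have h := ((Tendsto.mul hU hB).div tendsto_P_sqrt (by positivity)).const_mul (k ! : ℝ)
  refine ⟨_, by positivity, h.congr' ?_⟩
  filter_upwards [eventually_gt_atTop 0] with n hn
  have hn' : (0 : ℝ) < n := by exact_mod_cast hn
  have p1 := coeff_B_pow_pos (3 * k) n
  have e : (n : ℝ) ^ ((n : ℝ) + 3 * (k : ℝ) / 2 - 2) =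
      (n : ℝ) ^ n * (n : ℝ) ^ ((((3 * k : ℕ) : ℝ) + 1) / 2 - 1) * √n / (n : ℝ) ^ 2 := by
    rw [Real.sqrt_eq_rpow, ← Real.rpow_natCast, ← Real.rpow_natCast, ← Real.rpow_add hn',
      ← Real.rpow_add hn', ← Real.rpow_sub hn']
    congr 1
    push_cast
    ring
  have p2 : (0 : ℝ) < (n : ℝ) ^ ((((3 * k : ℕ) : ℝ) + 1) / 2 - 1) := by positivity
  have p3 : (0 : ℝ) < √n := by positivity
  have p4 : (0 : ℝ) < n ! := by positivity
  rw [e, Pi.div_apply, coeff_theta, U, PowerSeries.coeff_mk, w, coeff_P]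
  field_simp
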